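/- For all real numbers a, p and all positive integers d, n, the Mneimneh-like sum with all exponents equal to 1 satisfies M_n^{({1}_d)}(a,p) = Σ_{n ≥ n_1 ≥ … ≥ n_d ≥ 1} ((1−p+ap)^{n_d} − (1−p)^{n_d}) / (n_1 n_2 ⋯ n_d). -/

import Mathlib

/-- `ent m α` is the entry `n_{α+1}` (0-indexed access) of the index tuple `m`,
with junk value `1` out of range. -/
def ent {L : ℕ} (m : Fin L → ℕ) (α : ℕ) : ℕ :=
  if h : α < L then m ⟨α, h⟩ else 1

/-- The finite set of index tuples `(n₁,…,n_L)` with `n ≥ n₁ ≥ n₂ ≥ ⋯ ≥ n_L ≥ 1`. -/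
def Idx (n L : ℕ) : Finset (Fin L → ℕ) :=
  (Fintype.piFinset fun _ : Fin L => Finset.Icc 1 n).filter
    fun m => ∀ i j : Fin L, i ≤ j → m j ≤ m i

/-- Generalized multiple harmonic-star value
`ζ*_k(s₁,…,s_d; a) = ∑_{k ≥ n₁ ≥ ⋯ ≥ n_d ≥ 1} a^{n_d}/(n₁^{s₁} ⋯ n_d^{s_d})`. -/
noncomputable def zetaStarK (k : ℕ) (s : List ℕ) (a : ℝ) : ℝ :=
  ∑ m ∈ Idx k s.length,
    a ^ ent m (s.length - 1) / ∏ i : Fin s.length, (m i : ℝ) ^ s.get i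

/-- Mneimneh-like sum
`M_n^{(s₁,…,s_d)}(a,p) = ∑_{k=1}^n C(n,k)·p^k·(1-p)^{n-k}·ζ*_k(s;a)`. -/
noncomputable def M (n : ℕ) (s : List ℕ) (a p : ℝ) : ℝ :=
  ∑ k ∈ Finset.Icc 1 n, (n.choose k : ℝ) * p ^ k * (1 - p) ^ (n - k) * zetaStarK k s a

theorem sum_Idx_succ (n L : ℕ) (φ : (Fin (L + 1) → ℕ) → ℝ) :
    ∑ t ∈ Idx n (L + 1), φ t =
      ∑ m ∈ Finset.Icc 1 n, ∑ t ∈ Idx m L, φ (Fin.cons m t) := by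
  rw [Finset.sum_sigma']
  refine Finset.sum_bij' (fun t _ => (⟨t 0, Fin.tail t⟩ : (_ : ℕ) × (Fin L → ℕ)))
    (fun x _ => (Fin.cons x.1 x.2 : Fin (L + 1) → ℕ)) ?_ ?_ ?_ ?_ ?_
  · intro t ht
    simp only [Idx, Finset.mem_filter, Fintype.mem_piFinset, Finset.mem_Icc,
      Finset.mem_sigma] at ht ⊢
    refine ⟨ht.1 0, fun i => ⟨(ht.1 i.succ).1, ht.2 0 i.succ (Fin.zero_le _)⟩, ?_⟩
    intro i j hij
    exact ht.2 i.succ j.succ (Fin.succ_le_succ_iff.mpr hij)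
  · rintro ⟨m, t⟩ ht
    simp only [Idx, Finset.mem_filter, Fintype.mem_piFinset, Finset.mem_Icc,
      Finset.mem_sigma] at ht ⊢
    obtain ⟨hm, h1, h2⟩ := ht
    refine ⟨?_, ?_⟩
    · intro i
      refine Fin.cases ?_ (fun i => ?_) i
      · simpa using hm
      · simpa using ⟨(h1 i).1, (h1 i).2.trans hm.2⟩
    · intro i j
      refine Fin.cases ?_ (fun i => ?_) i <;> refine Fin.cases ?_ (fun j => ?_) j
      · simp
      · intro _
        simpa using (h1 j).2
      · intro h
        simp at h
      · intro h
        simpa using h2 i j (Fin.succ_le_succ_iff.mp h)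
  · intro t _
    exact Fin.cons_self_tail t
  · rintro ⟨m, t⟩ _
    simp
  · intro t _
    simp only [Fin.cons_self_tail]

/-- iterated harmonic sum -/
noncomputable def Fsum (g : ℕ → ℝ) (L n : ℕ) : ℝ :=
  ∑ t ∈ Idx n (L + 1), g (ent t L) / ∏ i, (t i : ℝ)

theorem Fsum_zero (g : ℕ → ℝ) (n : ℕ) :
    Fsum g 0 n = ∑ m ∈ Finset.Icc 1 n, g m / m := by
  unfold Fsum
  rw [sum_Idx_succ]
  refine Finset.sum_congr rfl fun m _ => ?_
  have : Idx m 0 = {default} := by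
    ext t
    have ht : t = default := Subsingleton.elim _ _
    simp only [Finset.mem_singleton, ht, iff_true]
    simp only [Idx, Finset.mem_filter, Fintype.mem_piFinset]
    exact ⟨fun i => i.elim0, fun i => i.elim0⟩
  rw [this]
  simp [ent]

theorem Fsum_succ (g : ℕ → ℝ) (L n : ℕ) :
    Fsum g (L + 1) n = ∑ m ∈ Finset.Icc 1 n, Fsum g L m / m := by
  unfold Fsum
  rw [sum_Idx_succ]
  refine Finset.sum_congr rfl fun m _ => ?_
  rw [Finset.sum_div]
  refine Finset.sum_congr rfl fun t _ => ?_
  have h : ent (Fin.cons m t : Fin (L + 1 + 1) → ℕ) (L + 1) = ent t L := by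
    simp only [ent, Nat.lt_succ_self, dif_pos]
    exact Fin.cons_succ (α := fun _ => ℕ) m t ⟨L, Nat.lt_succ_self L⟩
  rw [h, Fin.prod_univ_succ]
  simp only [Fin.cons_zero, Fin.cons_succ]
  rw [div_div, mul_comm]

/-- binomial transform -/
noncomputable def Tr (p : ℝ) (f : ℕ → ℝ) (n : ℕ) : ℝ :=
  ∑ k ∈ Finset.Icc 1 n, (n.choose k : ℝ) * p ^ k * (1 - p) ^ (n - k) * f k

theorem Tr_range (p : ℝ) (f : ℕ → ℝ) (n : ℕ) : Tr p f n =
    ∑ k ∈ Finset.range n,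
      (n.choose (k + 1) : ℝ) * p ^ (k + 1) * (1 - p) ^ (n - (k + 1)) * f (k + 1) := by
  unfold Tr
  rw [Finset.range_eq_Ico, Finset.sum_Ico_add' (fun k => (n.choose k : ℝ) * p ^ k *
    (1 - p) ^ (n - k) * f k) 0 n 1]
  rfl

theorem Tr_step (p : ℝ) (g f : ℕ → ℝ) (g0 : g 0 = 0)
    (hg : ∀ k, g (k + 1) = g k + f (k + 1) / ((k + 1 : ℕ) : ℝ)) (n : ℕ) :
    Tr p g (n + 1) = Tr p g n + Tr p f (n + 1) / ((n + 1 : ℕ) : ℝ) := by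
  have e1 : Tr p g n = ∑ k ∈ Finset.range (n + 1),
      (n.choose k : ℝ) * p ^ k * (1 - p) ^ (n - k) * g k := by
    rw [Finset.sum_range_succ', Tr_range, g0]; simp
  have e2 : ∑ k ∈ Finset.range (n + 1),
      (n.choose (k + 1) : ℝ) * p ^ (k + 1) * (1 - p) ^ (n - k) * g (k + 1)
      = (1 - p) * Tr p g n := by
    rw [Finset.sum_range_succ, Tr_range, Finset.mul_sum]
    simp only [Nat.choose_succ_self, Nat.cast_zero, zero_mul, add_zero]
    refine Finset.sum_congr rfl fun k hk => ?_
    have hk' := Finset.mem_range.mp hk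
    obtain ⟨c, rfl⟩ := Nat.exists_eq_add_of_lt hk'
    have h1 : k + c + 1 - k = c + 1 := by omega
    have h2 : k + c + 1 - (k + 1) = c := by omega
    rw [h1, h2]; ring
  have e3 : Tr p g (n + 1) = (1 - p) * Tr p g n + ∑ k ∈ Finset.range (n + 1),
      (n.choose k : ℝ) * p ^ (k + 1) * (1 - p) ^ (n - k) * g (k + 1) := by
    rw [← e2, Tr_range, ← Finset.sum_add_distrib]
    refine Finset.sum_congr rfl fun k _ => ?_
    rw [Nat.choose_succ_succ, Nat.add_sub_add_right]
    push_cast; ring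
  have e4 : ∑ k ∈ Finset.range (n + 1),
      (n.choose k : ℝ) * p ^ (k + 1) * (1 - p) ^ (n - k) * g (k + 1)
      = p * Tr p g n + Tr p f (n + 1) / ((n + 1 : ℕ) : ℝ) := by
    rw [e1, Tr_range, Finset.mul_sum, Finset.sum_div, ← Finset.sum_add_distrib]
    refine Finset.sum_congr rfl fun k _ => ?_
    have hc : ((n + 1 : ℕ) : ℝ) * n.choose k = (n + 1).choose (k + 1) * ((k + 1 : ℕ) : ℝ) := by
      exact_mod_cast Nat.add_one_mul_choose_eq n k
    have hn : ((n + 1 : ℕ) : ℝ) ≠ 0 := by positivity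
    have hk : ((k + 1 : ℕ) : ℝ) ≠ 0 := by positivity
    have hc' : ((n + 1).choose (k + 1) : ℝ) = ((n + 1 : ℕ) : ℝ) * n.choose k / ((k + 1 : ℕ) : ℝ) := by
      rw [hc]; field_simp
    rw [hg, Nat.add_sub_add_right, hc']
    field_simp
    ring
  rw [e3, e4]; ring

theorem Tr_H (p : ℝ) (g f : ℕ → ℝ) (hg : ∀ n, g n = ∑ m ∈ Finset.Icc 1 n, f m / m) (n : ℕ) :
    Tr p g n = ∑ m ∈ Finset.Icc 1 n, Tr p f m / m := by
  induction n with
  | zero => simp [Tr]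
  | succ n ih =>
    rw [Finset.sum_Icc_succ_top (by omega), ← ih]
    refine Tr_step p g f (by simp [hg]) (fun k => ?_) n
    rw [hg, hg, Finset.sum_Icc_succ_top (by omega)]

theorem Tr_pow (a p : ℝ) (n : ℕ) :
    Tr p (fun k => a ^ k) n = (1 - p + a * p) ^ n - (1 - p) ^ n := by
  rw [add_comm, add_pow, Finset.sum_range_succ', Tr_range]
  simp only [pow_zero, Nat.sub_zero, Nat.choose_zero_right, Nat.cast_one, one_mul, mul_one,
    add_sub_cancel_right]
  refine Finset.sum_congr rfl fun k _ => ?_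
  rw [mul_pow]; ring

theorem Tr_Fsum (p : ℝ) (g : ℕ → ℝ) (L n : ℕ) :
    Tr p (Fsum g L) n = Fsum (Tr p g) L n := by
  induction L generalizing n with
  | zero => rw [Fsum_zero]; exact Tr_H p _ _ (Fsum_zero g) n
  | succ L ih =>
    rw [Fsum_succ, Tr_H p _ _ (Fsum_succ g L) n]
    simp only [ih]

theorem zetaStarK_eq (k : ℕ) (s : List ℕ) (a : ℝ) (L : ℕ) (hs : ∀ x ∈ s, x = 1)
    (hl : s.length = L + 1) : zetaStarK k s a = Fsum (fun k => a ^ k) L k := by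
  have h : ∀ i, s.get i = 1 := fun i => hs _ (List.get_mem s i)
  unfold zetaStarK Fsum
  simp only [h, pow_one]
  clear h hs
  generalize s.length = l at *
  subst hl
  rfl

/-- Transformation of the Mneimneh-like sum for `s = {1}_d`. -/
theorem stmt_5 (a p : ℝ) (d n : ℕ) (hd : 0 < d) (hn : 0 < n) :
    M n (List.replicate d 1) a p =
      ∑ t ∈ Idx n d,
        ((1 - p + a * p) ^ ent t (d - 1) - (1 - p) ^ ent t (d - 1)) /
          ∏ i ∈ Finset.range d, (ent t i : ℝ) := by
  obtain ⟨L, rfl⟩ : ∃ L, d = L + 1 := ⟨d - 1, by omega⟩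
  have h1 : M n (List.replicate (L + 1) 1) a p = Tr p (Fsum (fun k => a ^ k) L) n := by
    unfold M Tr
    refine Finset.sum_congr rfl fun k _ => ?_
    rw [zetaStarK_eq k _ a L (fun x hx => List.eq_of_mem_replicate hx) (by simp)]
  rw [h1, Tr_Fsum]
  unfold Fsum
  refine Finset.sum_congr rfl fun t _ => ?_
  have hp : ∀ i : Fin (L + 1), ent t (i : ℕ) = t i := fun i => by
    simp only [ent, i.isLt, dif_pos]
  rw [Tr_pow, Finset.prod_range]
  simp only [hp, Nat.add_sub_cancel]
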